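/- For integers r, s ≥ 3, the pendant-tree 3-connectivity of the Cartesian product of complete graphs satisfies τ_3(K_r □ K_s) = r + s − 4. -/

import Mathlib

open SimpleGraph

/-- A pendant `S`-Steiner tree in `G`: a subgraph `T` of `G` that is a tree,
contains `S`, and in which every vertex of `S` has degree 1. -/
def IsPendantSTree {V : Type*} (G : SimpleGraph V) (S : Set V) (T : G.Subgraph) : Prop :=
  S ⊆ T.verts ∧ T.coe.IsTree ∧ ∀ v ∈ S, (T.neighborSet v).ncard = 1

/-- A family of pairwise internally disjoint pendant `S`-Steiner trees. -/
def IsIntDisjointFamily {V : Type*} (G : SimpleGraph V) (S : Set V)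
    (F : Finset G.Subgraph) : Prop :=
  (∀ T ∈ F, IsPendantSTree G S T) ∧
  ∀ T ∈ F, ∀ T' ∈ F, T ≠ T' →
    T.edgeSet ∩ T'.edgeSet = ∅ ∧ T.verts ∩ T'.verts = S

/-- A family of pairwise edge-disjoint pendant `S`-Steiner trees. -/
def IsEdgeDisjointFamily {V : Type*} (G : SimpleGraph V) (S : Set V)
    (F : Finset G.Subgraph) : Prop :=
  (∀ T ∈ F, IsPendantSTree G S T) ∧
  ∀ T ∈ F, ∀ T' ∈ F, T ≠ T' → T.edgeSet ∩ T'.edgeSet = ∅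

/-- `τ(S)`: the maximum number of pairwise internally disjoint pendant `S`-Steiner trees. -/
noncomputable def tauLocal {V : Type*} (G : SimpleGraph V) (S : Set V) : ℕ :=
  sSup {n | ∃ F : Finset G.Subgraph, F.card = n ∧ IsIntDisjointFamily G S F}

/-- Pendant-tree `k`-connectivity `τ_k(G)`. -/
noncomputable def tau {V : Type*} (G : SimpleGraph V) (k : ℕ) : ℕ :=
  sInf {n | ∃ S : Finset V, S.card = k ∧ tauLocal G ↑S = n}

/-- `μ(S)`: the maximum number of pairwise edge-disjoint pendant `S`-Steiner trees. -/
noncomputable def muLocal {V : Type*} (G : SimpleGraph V) (S : Set V) : ℕ :=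
  sSup {n | ∃ F : Finset G.Subgraph, F.card = n ∧ IsEdgeDisjointFamily G S F}

/-- Pendant-tree `k`-edge-connectivity `μ_k(G)`. -/
noncomputable def mu {V : Type*} (G : SimpleGraph V) (k : ℕ) : ℕ :=
  sInf {n | ∃ S : Finset V, S.card = k ∧ muLocal G ↑S = n}

/-- Vertex connectivity (cut version): the least size of a vertex set whose removal
disconnects the graph or leaves at most one vertex. -/
noncomputable def kappa {V : Type*} [Fintype V] (G : SimpleGraph V) : ℕ :=
  sInf {n | ∃ S : Finset V, S.card = n ∧
    (¬ ((⊤ : G.Subgraph).deleteVerts ↑S).coe.Connected ∨ Fintype.card V - S.card ≤ 1)}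

/-- Edge connectivity: the least size of an edge set whose removal disconnects the graph. -/
noncomputable def edgeConn {V : Type*} (G : SimpleGraph V) : ℕ :=
  sInf {n | ∃ F : Finset (Sym2 V), F.card = n ∧ ↑F ⊆ G.edgeSet ∧
    ¬ (G.deleteEdges ↑F).Connected}

/-- Edges of `G` with one endpoint in `S` and the other outside `S`. -/
def crossEdges {V : Type*} (G : SimpleGraph V) (S : Set V) : Set (Sym2 V) :=
  {e | e ∈ G.edgeSet ∧ ∃ u v, e = s(u, v) ∧ u ∈ S ∧ v ∉ S}

/-!
A *core* of `S` is a connected vertex set disjoint from `S` in which every vertex of `S` has a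
neighbour; disjoint cores carry internally disjoint pendant `S`-trees. If `S` is a set of three
vertices of `K_r □ K_s` with first coordinates `A` and second coordinates `B`, then each
`{a} × B` with `a ∉ A` and each `A × {b}` with `b ∉ B` is a core, which gives
`r + s - |A| - |B|` disjoint cores, and `|A| + |B| - 4` further ones can be found inside `A × B`.

Conversely, a pendant tree on at least three terminals has no edge between terminals, so
internally disjoint pendant `S`-trees leave a terminal `x` through distinct neighbours outside `S`.
Choosing two neighbours of `x` as the other terminals leaves only `deg x - 2 = r + s - 4` of them.
-/

section Trees

variable {V : Type*} {G : SimpleGraph V} {S W : Set V}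

theorem exists_isTree_le_of_subgraph_connected {H : G.Subgraph} (hH : H.Connected) :
    ∃ T ≤ H, T.verts = H.verts ∧ T.coe.IsTree := by
  obtain ⟨K, hKH, hK⟩ := hH.coe.exists_isTree_le
  let T : G.Subgraph :=
    { verts := H.verts
      Adj := (K.map (Function.Embedding.subtype (· ∈ H.verts))).Adj
      adj_sub := by
        rintro _ _ ⟨-, u, v, huv, rfl, rfl⟩
        exact (hKH huv).adj_sub
      edge_vert := by
        rintro _ _ ⟨-, u, v, -, rfl, rfl⟩
        exact u.2
      symm := (K.map _).symm }
  have hTK : T.coe = K := comap_map_eq (Function.Embedding.subtype _) K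
  refine ⟨T, ⟨le_rfl, ?_⟩, rfl, hTK ▸ hK⟩
  rintro _ _ ⟨-, u, v, huv, rfl, rfl⟩
  exact hKH huv

/-- The subgraph of `G` consisting of the graph induced on `W` together with the edge from each
`v ∈ S` to `f v`. Here `f` is arbitrary: the edge is only present when `f v ∈ W` and `v` is
adjacent to `f v` in `G`. -/
def attachLeaves (G : SimpleGraph V) (S W : Set V) (f : V → V) : G.Subgraph where
  verts := S ∪ W
  Adj u v := G.Adj u v ∧ (u ∈ W ∧ v ∈ W ∨ u ∈ S ∧ v ∈ W ∧ v = f u ∨ v ∈ S ∧ u ∈ W ∧ u = f v)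
  adj_sub h := h.1
  edge_vert := by grind
  symm := ⟨fun u v h => ⟨h.1.symm, by grind⟩⟩

theorem attachLeaves_connected {f : V → V} (hW : (G.induce W).Connected)
    (hf : ∀ v ∈ S, f v ∈ W ∧ G.Adj v (f v)) : (attachLeaves G S W f).Connected := by
  obtain ⟨w⟩ := hW.nonempty
  let φ : G.induce W →g (attachLeaves G S W f).coe :=
    ⟨fun u => ⟨u, Or.inr u.2⟩, fun {u v} huv => ⟨huv, Or.inl ⟨u.2, v.2⟩⟩⟩
  have reachable_core (u : W) : (attachLeaves G S W f).coe.Reachable (φ u) (φ w) :=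
    (hW.preconnected u w).map φ
  rw [Subgraph.connected_iff', connected_iff_exists_forall_reachable]
  refine ⟨φ w, ?_⟩
  rintro ⟨v, hv | hv⟩
  · have hadj : (attachLeaves G S W f).coe.Adj ⟨v, Or.inl hv⟩ (φ ⟨f v, (hf v hv).1⟩) :=
      ⟨(hf v hv).2, Or.inr (Or.inl ⟨hv, (hf v hv).1, rfl⟩)⟩
    exact (hadj.reachable.trans (reachable_core _)).symm
  · exact (reachable_core ⟨v, hv⟩).symm

theorem isPendantSTree_of_le_attachLeaves {f : V → V} {T : G.Subgraph} (hSW : Disjoint S W)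
    (hW : W.Nonempty) (hle : T ≤ attachLeaves G S W f) (hverts : T.verts = S ∪ W)
    (hT : T.coe.IsTree) : IsPendantSTree G S T := by
  refine ⟨hverts ▸ Set.subset_union_left, hT, fun v hv => ?_⟩
  have hvW : v ∉ W := hSW.notMem_of_mem_left hv
  have eq_of_adj {u : V} (hu : T.Adj v u) : u = f v := by
    have := (hle.2 hu).2
    grind
  obtain ⟨w, hw⟩ := hW
  have hv' : v ∈ T.verts := hverts ▸ Or.inl hv
  have hw' : w ∈ T.verts := hverts ▸ Or.inr hw
  have : Nontrivial T.verts := ⟨⟨v, hv'⟩, ⟨w, hw'⟩, by grind⟩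
  obtain ⟨u, hu⟩ := hT.connected.preconnected.exists_adj_of_nontrivial ⟨v, hv'⟩
  refine Set.ncard_eq_one.2 ⟨u, Set.eq_singleton_iff_unique_mem.2 ⟨hu, fun u' hu' => ?_⟩⟩
  rw [eq_of_adj hu', eq_of_adj hu]

/-- A *core* of `S`: a connected vertex set disjoint from `S` in which every vertex of `S` has a
neighbour. These are the vertex sets that can serve as the interior of a pendant `S`-tree. -/
structure IsSteinerCore (G : SimpleGraph V) (S W : Set V) : Prop where
  connected : (G.induce W).Connected
  disjoint : Disjoint S W
  exists_adj : ∀ v ∈ S, ∃ w ∈ W, G.Adj v w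

theorem isSteinerCore_of_isClique (hW : G.IsClique W) (hne : W.Nonempty) (hSW : Disjoint S W)
    (hadj : ∀ v ∈ S, ∃ w ∈ W, G.Adj v w) : IsSteinerCore G S W := by
  have := hne.to_subtype
  exact ⟨induce_eq_top.2 hW ▸ connected_top, hSW, hadj⟩

theorem IsSteinerCore.nonempty (h : IsSteinerCore G S W) : W.Nonempty :=
  Set.nonempty_coe_sort.1 h.connected.nonempty

theorem IsSteinerCore.exists_isPendantSTree (h : IsSteinerCore G S W) :
    ∃ T : G.Subgraph, T.verts = S ∪ W ∧ IsPendantSTree G S T := by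
  choose! f hf using h.exists_adj
  obtain ⟨T, hle, hverts, hT⟩ :=
    exists_isTree_le_of_subgraph_connected (attachLeaves_connected h.connected hf)
  exact ⟨T, hverts, isPendantSTree_of_le_attachLeaves h.disjoint h.nonempty hle hverts hT⟩

theorem IsPendantSTree.exists_adj {T : G.Subgraph} (hT : IsPendantSTree G S T) {v : V}
    (hv : v ∈ S) : ∃ u, T.Adj v u :=
  Set.nonempty_of_ncard_ne_zero (ne_zero_of_eq_one (hT.2.2 v hv))

theorem IsPendantSTree.eq_of_adj {T : G.Subgraph} (hT : IsPendantSTree G S T) {v u w : V}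
    (hv : v ∈ S) (hu : T.Adj v u) (hw : T.Adj v w) : u = w :=
  (Set.ncard_le_one_iff (Set.finite_of_ncard_ne_zero (ne_zero_of_eq_one (hT.2.2 v hv)))).1
    (hT.2.2 v hv).le hu hw

theorem IsPendantSTree.not_adj {T : G.Subgraph} (hT : IsPendantSTree G S T)
    (hS : 2 < S.encard) {x y : V} (hx : x ∈ S) (hy : y ∈ S) : ¬T.Adj x y := by
  intro hxy
  have hpair : ({x, y} : Set V).encard ≤ 2 := by
    simpa [one_add_one_eq_two] using Set.encard_insert_le {y} x
  obtain ⟨z, hzS, hz⟩ : ∃ z ∈ S, z ∉ ({x, y} : Set V) :=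
    Set.not_subset.1 fun h => hS.not_ge ((Set.encard_le_encard h).trans hpair)
  obtain ⟨p⟩ := hT.2.1.connected.preconnected ⟨x, hT.1 hx⟩ ⟨z, hT.1 hzS⟩
  obtain ⟨d, -, hd, hd'⟩ := p.exists_boundary_dart (Subtype.val ⁻¹' {x, y}) (by simp) hz
  have hadj : T.Adj d.fst d.snd := d.adj
  rcases hd with hd | hd <;> rw [hd] at hadj
  · exact hd' (Or.inr (hT.eq_of_adj hx hadj hxy))
  · exact hd' (Or.inl (hT.eq_of_adj hy hadj hxy.symm))

end Trees

section UpperBound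

variable {V : Type*} {G : SimpleGraph V} {S : Set V}

theorem IsIntDisjointFamily.card_le_ncard_neighborSet_diff {F : Finset G.Subgraph}
    (hF : IsIntDisjointFamily G S F) (hS : 2 < S.encard) {x : V} (hx : x ∈ S)
    (hfin : (G.neighborSet x).Finite) : F.card ≤ (G.neighborSet x \ S).ncard := by
  have : Nonempty V := ⟨x⟩
  have hadj : ∀ T ∈ F, ∃ u, T.Adj x u := fun T hT => (hF.1 T hT).exists_adj hx
  choose! g hg using hadj
  rw [← Set.ncard_coe_finset F]
  refine Set.ncard_le_ncard_of_injOn g (fun T hT => ⟨(hg T hT).adj_sub, fun hgS => ?_⟩) ?_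
    (hfin.subset Set.sdiff_subset)
  · exact (hF.1 T hT).not_adj hS hx hgS (hg T hT)
  · intro T hT T' hT' heq
    by_contra hne
    have hmem : s(x, g T) ∈ T.edgeSet ∩ T'.edgeSet := ⟨hg T hT, heq ▸ hg T' hT'⟩
    simp [(hF.2 T hT T' hT' hne).1] at hmem

theorem tauLocal_le_ncard_neighborSet_diff (hS : 2 < S.encard) {x : V} (hx : x ∈ S)
    (hfin : (G.neighborSet x).Finite) : tauLocal G S ≤ (G.neighborSet x \ S).ncard := by
  refine csSup_le ⟨0, ∅, rfl, by simp [IsIntDisjointFamily]⟩ ?_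
  rintro _ ⟨F, rfl, hF⟩
  exact hF.card_le_ncard_neighborSet_diff hS hx hfin

theorem IsIntDisjointFamily.card_le_tauLocal {F : Finset G.Subgraph}
    (hF : IsIntDisjointFamily G S F) (hS : 2 < S.encard) {x : V} (hx : x ∈ S)
    (hfin : (G.neighborSet x).Finite) : F.card ≤ tauLocal G S := by
  refine le_csSup ⟨(G.neighborSet x \ S).ncard, ?_⟩ ⟨F, rfl, hF⟩
  rintro _ ⟨F', rfl, hF'⟩
  exact hF'.card_le_ncard_neighborSet_diff hS hx hfin

theorem tau_le_degree_add_one_sub {k : ℕ} (hk : 3 ≤ k) (x : V) [Fintype (G.neighborSet x)]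
    (hx : k ≤ G.degree x + 1) : tau G k ≤ G.degree x + 1 - k := by
  classical
  obtain ⟨P, hP, hPcard⟩ := Finset.exists_subset_card_eq
    (show k - 1 ≤ (G.neighborFinset x).card from by rw [card_neighborFinset_eq_degree]; omega)
  have hxN : x ∉ G.neighborFinset x := by simp
  have hcard : (insert x P).card = k := by
    rw [Finset.card_insert_of_notMem fun h => hxN (hP h)]
    omega
  have hS : 2 < (↑(insert x P) : Set V).encard := by
    rw [Set.encard_coe_eq_coe_finsetCard, hcard]
    exact_mod_cast hk
  calc tau G k ≤ tauLocal G ↑(insert x P) := Nat.sInf_le ⟨_, hcard, rfl⟩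
    _ ≤ (G.neighborSet x \ ↑(insert x P)).ncard :=
      tauLocal_le_ncard_neighborSet_diff hS (by simp) (Set.toFinite _)
    _ = (G.neighborFinset x \ P).card := by
      rw [← coe_neighborFinset, ← Finset.coe_sdiff, Set.ncard_coe_finset,
        Finset.sdiff_insert_of_notMem hxN]
    _ = G.degree x + 1 - k := by
      rw [Finset.card_sdiff_of_subset hP, card_neighborFinset_eq_degree]
      omega

theorem le_tau [Finite V] {k n : ℕ} (hk : k ≤ Nat.card V)
    (h : ∀ S : Finset V, S.card = k → n ≤ tauLocal G ↑S) : n ≤ tau G k := by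
  have := Fintype.ofFinite V
  obtain ⟨S, -, hS⟩ := Finset.exists_subset_card_eq (s := Finset.univ (α := V)) (n := k)
    (by rwa [Finset.card_univ, ← Nat.card_eq_fintype_card])
  refine le_csInf ⟨_, S, hS, rfl⟩ ?_
  rintro _ ⟨S, hS, rfl⟩
  exact h S hS

end UpperBound

section Packing

variable {V : Type*} {G : SimpleGraph V} {S U U' : Set V} {m n : ℕ}

/-- The vertex set `U` contains `n` pairwise disjoint cores of `S`. Recording `U` makes packings in
disjoint regions additive. -/
def HasCorePacking (G : SimpleGraph V) (S U : Set V) (n : ℕ) : Prop :=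
  ∃ W : Fin n → Set V,
    (∀ i, IsSteinerCore G S (W i)) ∧ (∀ i, W i ⊆ U) ∧ Pairwise (Function.onFun Disjoint W)

theorem hasCorePacking_card {ι : Type*} [Fintype ι] {W : ι → Set V}
    (hW : ∀ i, IsSteinerCore G S (W i)) (hU : ∀ i, W i ⊆ U)
    (hdisj : Pairwise (Function.onFun Disjoint W)) : HasCorePacking G S U (Fintype.card ι) :=
  let e := (Fintype.equivFin ι).symm
  ⟨W ∘ e, fun i => hW (e i), fun i => hU (e i), fun _ _ hij => hdisj (e.injective.ne hij)⟩

theorem hasCorePacking_zero : HasCorePacking G S U 0 :=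
  ⟨Fin.elim0, fun i => i.elim0, fun i => i.elim0, fun i => i.elim0⟩

theorem IsSteinerCore.hasCorePacking_one (hU : IsSteinerCore G S U) : HasCorePacking G S U 1 :=
  ⟨fun _ => U, fun _ => hU, fun _ => subset_rfl, fun i j hij => (hij (Subsingleton.elim i j)).elim⟩

theorem HasCorePacking.mono (h : HasCorePacking G S U n) (hU : U ⊆ U') :
    HasCorePacking G S U' n :=
  let ⟨W, hW, hWU, hdisj⟩ := h
  ⟨W, hW, fun i => (hWU i).trans hU, hdisj⟩

theorem HasCorePacking.union (h : HasCorePacking G S U m) (h' : HasCorePacking G S U' n)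
    (hU : Disjoint U U') : HasCorePacking G S (U ∪ U') (m + n) := by
  obtain ⟨W, hW, hWU, hdisj⟩ := h
  obtain ⟨W', hW', hWU', hdisj'⟩ := h'
  have hcross (i : Fin m) (j : Fin n) : Disjoint (W i) (W' j) := hU.mono (hWU i) (hWU' j)
  rw [← Fintype.card_fin m, ← Fintype.card_fin n, ← Fintype.card_sum]
  refine hasCorePacking_card (W := Sum.elim W W') ?_ ?_ ?_
  · rintro (i | j)
    exacts [hW i, hW' j]
  · rintro (i | j)
    exacts [(hWU i).trans Set.subset_union_left, (hWU' j).trans Set.subset_union_right]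
  · rintro (i | j) (i' | j') hne
    exacts [hdisj fun h => hne (congrArg _ h), hcross i j', (hcross i' j).symm,
      hdisj' fun h => hne (congrArg _ h)]

theorem isIntDisjointFamily_of_verts_inter_eq (hS : 2 < S.encard) {F : Finset G.Subgraph}
    (hF : ∀ T ∈ F, IsPendantSTree G S T)
    (hinter : ∀ T ∈ F, ∀ T' ∈ F, T ≠ T' → T.verts ∩ T'.verts = S) :
    IsIntDisjointFamily G S F := by
  refine ⟨hF, fun T hT T' hT' hne => ⟨?_, hinter T hT T' hT' hne⟩⟩
  refine Set.eq_empty_of_forall_notMem (Sym2.ind fun u v => ?_)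
  rintro ⟨huv : T.Adj u v, huv' : T'.Adj u v⟩
  have hverts := hinter T hT T' hT' hne
  exact (hF T hT).not_adj hS (hverts ▸ ⟨huv.fst_mem, huv'.fst_mem⟩)
    (hverts ▸ ⟨huv.snd_mem, huv'.snd_mem⟩) huv

theorem HasCorePacking.le_tauLocal (h : HasCorePacking G S U n) (hS : 2 < S.encard) {x : V}
    (hx : x ∈ S) (hfin : (G.neighborSet x).Finite) : n ≤ tauLocal G S := by
  obtain ⟨W, hW, -, hdisj⟩ := h
  choose T hverts hT using fun i => (hW i).exists_isPendantSTree
  have hinter {i j : Fin n} (hij : i ≠ j) : (T i).verts ∩ (T j).verts = S := by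
    rw [hverts, hverts, ← Set.union_inter_distrib_left, (hdisj hij).inter_eq, Set.union_empty]
  have hinj : Function.Injective T := by
    intro i j hij
    by_contra hne
    obtain ⟨w, hw⟩ := (hW i).nonempty
    have hwS : w ∈ S := by
      rw [← hinter hne, ← hij, Set.inter_self, hverts]
      exact Or.inr hw
    exact (hW i).disjoint.notMem_of_mem_left hwS hw
  have hF : IsIntDisjointFamily G S (Finset.univ.map ⟨T, hinj⟩) := by
    refine isIntDisjointFamily_of_verts_inter_eq hS ?_ ?_
    · simpa using hT
    · simp only [Finset.mem_map, Finset.mem_univ, true_and, Function.Embedding.coeFn_mk]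
      rintro _ ⟨i, rfl⟩ _ ⟨j, rfl⟩ hne
      exact hinter fun hij => hne (congrArg T hij)
  simpa using hF.card_le_tauLocal hS hx hfin

end Packing

section Rook

variable {α β : Type*}

/-- The Cartesian product of the complete graphs on `α` and `β`: two distinct cells of a board are
adjacent when they share a coordinate. -/
abbrev rookGraph (α β : Type*) : SimpleGraph (α × β) :=
  (⊤ : SimpleGraph α) □ (⊤ : SimpleGraph β)

theorem isClique_rookGraph_of_fst {W : Set (α × β)} {a : α} (hW : ∀ w ∈ W, w.1 = a) :
    (rookGraph α β).IsClique W := by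
  intro v hv w hw hne
  have hfst : v.1 = w.1 := (hW v hv).trans (hW w hw).symm
  exact boxProd_adj.2 (Or.inr ⟨fun hsnd => hne (Prod.ext hfst hsnd), hfst⟩)

theorem isClique_rookGraph_of_snd {W : Set (α × β)} {b : β} (hW : ∀ w ∈ W, w.2 = b) :
    (rookGraph α β).IsClique W := by
  intro v hv w hw hne
  have hsnd : v.2 = w.2 := (hW v hv).trans (hW w hw).symm
  exact boxProd_adj.2 (Or.inl ⟨fun hfst => hne (Prod.ext hfst hsnd), hsnd⟩)

theorem isSteinerCore_singleton_prod {S : Set (α × β)} (hS : S.Nonempty) {a : α}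
    (ha : a ∉ Prod.fst '' S) :
    IsSteinerCore (rookGraph α β) S ({a} ×ˢ (Prod.snd '' S)) := by
  refine isSteinerCore_of_isClique (isClique_rookGraph_of_fst fun w hw => hw.1)
    ((Set.singleton_nonempty a).prod (hS.image _)) ?_ fun v hv => ?_
  · exact Set.disjoint_left.2 fun v hv hva => ha ⟨v, hv, hva.1⟩
  · exact ⟨(a, v.2), ⟨rfl, v, hv, rfl⟩,
      boxProd_adj.2 (Or.inl ⟨fun hva => ha ⟨v, hv, hva⟩, rfl⟩)⟩

theorem isSteinerCore_prod_singleton {S : Set (α × β)} (hS : S.Nonempty) {b : β}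
    (hb : b ∉ Prod.snd '' S) :
    IsSteinerCore (rookGraph α β) S ((Prod.fst '' S) ×ˢ {b}) := by
  refine isSteinerCore_of_isClique (isClique_rookGraph_of_snd fun w hw => hw.2)
    ((hS.image _).prod (Set.singleton_nonempty b)) ?_ fun v hv => ?_
  · exact Set.disjoint_left.2 fun v hv hvb => hb ⟨v, hv, hvb.2⟩
  · exact ⟨(v.1, b), ⟨⟨v, hv, rfl⟩, rfl⟩,
      boxProd_adj.2 (Or.inr ⟨fun hvb => hb ⟨v, hv, hvb⟩, rfl⟩)⟩

section Outer

variable {S : Finset (α × β)} [DecidableEq α] [DecidableEq β]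

theorem hasCorePacking_compl_prod [Fintype α] (hS : S.Nonempty) :
    HasCorePacking (rookGraph α β) S ((↑(S.image Prod.fst))ᶜ ×ˢ ↑(S.image Prod.snd))
      (Fintype.card α - (S.image Prod.fst).card) := by
  have notMem (a : ↥(S.image Prod.fst)ᶜ) : a.1 ∉ Prod.fst '' (S : Set (α × β)) := by
    rw [← Finset.coe_image]
    exact Finset.mem_compl.1 a.2
  rw [← Finset.card_compl, ← Fintype.card_coe, Finset.coe_image, Finset.coe_image]
  exact hasCorePacking_card (fun a => isSteinerCore_singleton_prod hS (notMem a))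
    (fun a => Set.prod_mono_left (Set.singleton_subset_iff.2 (notMem a)))
    fun a a' hne =>
      Set.disjoint_prod.2 (Or.inl (Set.disjoint_singleton.2 (Subtype.coe_ne_coe.2 hne)))

theorem hasCorePacking_prod_compl [Fintype β] (hS : S.Nonempty) :
    HasCorePacking (rookGraph α β) S (↑(S.image Prod.fst) ×ˢ (↑(S.image Prod.snd))ᶜ)
      (Fintype.card β - (S.image Prod.snd).card) := by
  have notMem (b : ↥(S.image Prod.snd)ᶜ) : b.1 ∉ Prod.snd '' (S : Set (α × β)) := by
    rw [← Finset.coe_image]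
    exact Finset.mem_compl.1 b.2
  rw [← Finset.card_compl, ← Fintype.card_coe, Finset.coe_image, Finset.coe_image]
  exact hasCorePacking_card (fun b => isSteinerCore_prod_singleton hS (notMem b))
    (fun b => Set.prod_mono_right (Set.singleton_subset_iff.2 (notMem b)))
    fun b b' hne =>
      Set.disjoint_prod.2 (Or.inr (Set.disjoint_singleton.2 (Subtype.coe_ne_coe.2 hne)))

end Outer

section Inner

theorem isSteinerCore_singleton_of_fst_eq {a a' : α} {b₁ b₂ b₃ : β} (ha : a ≠ a')
    (h₁₃ : b₁ ≠ b₃) (h₂₃ : b₂ ≠ b₃) :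
    IsSteinerCore (rookGraph α β) {(a, b₁), (a, b₂), (a', b₃)} {(a, b₃)} := by
  refine isSteinerCore_of_isClique (IsClique.of_subsingleton Set.subsingleton_singleton)
    (Set.singleton_nonempty _) ?_ ?_
  · simp [h₁₃.symm, h₂₃.symm, ha]
  · simp [boxProd_adj, h₁₃, h₂₃, ha.symm]

theorem isSteinerCore_singleton_of_snd_eq {a₁ a₂ a₃ : α} {b b' : β} (hb : b ≠ b')
    (h₁₃ : a₁ ≠ a₃) (h₂₃ : a₂ ≠ a₃) :
    IsSteinerCore (rookGraph α β) {(a₁, b), (a₂, b), (a₃, b')} {(a₃, b)} := by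
  refine isSteinerCore_of_isClique (IsClique.of_subsingleton Set.subsingleton_singleton)
    (Set.singleton_nonempty _) ?_ ?_
  · simp [h₁₃.symm, h₂₃.symm, hb]
  · simp [boxProd_adj, h₁₃, h₂₃, hb.symm]

theorem isSteinerCore_fst_pair {a₁ a₂ a₃ : α} {b₁ b₂ b₃ : β} (ha₁₂ : a₁ ≠ a₂) (ha₁₃ : a₁ ≠ a₃)
    (hb₁₂ : b₁ ≠ b₂) (hb₁₃ : b₁ ≠ b₃) :
    IsSteinerCore (rookGraph α β) {(a₁, b₁), (a₂, b₂), (a₃, b₃)} {(a₁, b₂), (a₁, b₃)} := by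
  refine isSteinerCore_of_isClique (isClique_rookGraph_of_fst (a := a₁) (by simp))
    (Set.insert_nonempty _ _) ?_ ?_
  · simp [ha₁₂, ha₁₃, hb₁₂.symm, hb₁₃.symm]
  · simp [boxProd_adj, ha₁₂.symm, ha₁₃.symm, hb₁₂, hb₁₃]

theorem isSteinerCore_snd_pair {a₁ a₂ a₃ : α} {b₁ b₂ b₃ : β} (ha₁₂ : a₁ ≠ a₂) (ha₁₃ : a₁ ≠ a₃)
    (hb₁₂ : b₁ ≠ b₂) (hb₁₃ : b₁ ≠ b₃) :
    IsSteinerCore (rookGraph α β) {(a₁, b₁), (a₂, b₂), (a₃, b₃)} {(a₂, b₁), (a₃, b₁)} := by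
  refine isSteinerCore_of_isClique (isClique_rookGraph_of_snd (b := b₁) (by simp))
    (Set.insert_nonempty _ _) ?_ ?_
  · simp [ha₁₂.symm, ha₁₃.symm, hb₁₂, hb₁₃]
  · simp [boxProd_adj, ha₁₂, ha₁₃, hb₁₂.symm, hb₁₃.symm]

theorem exists_eq_insert_insert_of_card_eq_three {γ : Type*} [DecidableEq γ] {S : Finset γ}
    (hS : S.card = 3) {x y : γ} (hx : x ∈ S) (hy : y ∈ S) (hxy : x ≠ y) :
    ∃ z, S = {x, y, z} := by
  have hyx : y ∈ S.erase x := Finset.mem_erase.2 ⟨hxy.symm, hy⟩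
  obtain ⟨z, hz⟩ := Finset.card_eq_one.1 (show ((S.erase x).erase y).card = 1 by
    rw [Finset.card_erase_of_mem hyx, Finset.card_erase_of_mem hx, hS])
  exact ⟨z, by rw [← hz, Finset.insert_erase hyx, Finset.insert_erase hx]⟩

variable {S : Finset (α × β)} [DecidableEq α] [DecidableEq β]

theorem hasCorePacking_one_of_card_fst_eq_two (hS : S.card = 3)
    (hA : (S.image Prod.fst).card = 2) (hB : (S.image Prod.snd).card = 3) :
    HasCorePacking (rookGraph α β) S (↑(S.image Prod.fst) ×ˢ ↑(S.image Prod.snd)) 1 := by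
  have hsnd : Set.InjOn Prod.snd (S : Set (α × β)) := Finset.card_image_iff.1 (hB.trans hS.symm)
  obtain ⟨⟨a, b₁⟩, hx, ⟨_, b₂⟩, hy, hne, rfl⟩ : ∃ x ∈ S, ∃ y ∈ S, x ≠ y ∧ x.1 = y.1 :=
    Finset.exists_ne_map_eq_of_card_lt_of_maps_to (t := S.image Prod.fst) (by omega)
      fun x hx => Finset.mem_image_of_mem _ hx
  obtain ⟨⟨a', b₃⟩, rfl⟩ := exists_eq_insert_insert_of_card_eq_three hS hx hy hne
  have ha : a ≠ a' := by
    rintro rfl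
    simp at hA
  have hz : (a', b₃) ∈ ({(a, b₁), (a, b₂), (a', b₃)} : Finset (α × β)) := by simp
  have h₁₃ : b₁ ≠ b₃ := hsnd.ne hx hz fun h => ha (congrArg Prod.fst h)
  have h₂₃ : b₂ ≠ b₃ := hsnd.ne hy hz fun h => ha (congrArg Prod.fst h)
  push_cast
  exact (isSteinerCore_singleton_of_fst_eq ha h₁₃ h₂₃).hasCorePacking_one.mono (by simp)

theorem hasCorePacking_one_of_card_snd_eq_two (hS : S.card = 3)
    (hA : (S.image Prod.fst).card = 3) (hB : (S.image Prod.snd).card = 2) :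
    HasCorePacking (rookGraph α β) S (↑(S.image Prod.fst) ×ˢ ↑(S.image Prod.snd)) 1 := by
  have hfst : Set.InjOn Prod.fst (S : Set (α × β)) := Finset.card_image_iff.1 (hA.trans hS.symm)
  obtain ⟨⟨a₁, b⟩, hx, ⟨a₂, _⟩, hy, hne, rfl⟩ : ∃ x ∈ S, ∃ y ∈ S, x ≠ y ∧ x.2 = y.2 :=
    Finset.exists_ne_map_eq_of_card_lt_of_maps_to (t := S.image Prod.snd) (by omega)
      fun x hx => Finset.mem_image_of_mem _ hx
  obtain ⟨⟨a₃, b'⟩, rfl⟩ := exists_eq_insert_insert_of_card_eq_three hS hx hy hne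
  have hb : b ≠ b' := by
    rintro rfl
    simp at hB
  have hz : (a₃, b') ∈ ({(a₁, b), (a₂, b), (a₃, b')} : Finset (α × β)) := by simp
  have h₁₃ : a₁ ≠ a₃ := hfst.ne hx hz fun h => hb (congrArg Prod.snd h)
  have h₂₃ : a₂ ≠ a₃ := hfst.ne hy hz fun h => hb (congrArg Prod.snd h)
  push_cast
  exact (isSteinerCore_singleton_of_snd_eq hb h₁₃ h₂₃).hasCorePacking_one.mono (by simp)

theorem hasCorePacking_two_of_card_eq_three (hS : S.card = 3)
    (hA : (S.image Prod.fst).card = 3) (hB : (S.image Prod.snd).card = 3) :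
    HasCorePacking (rookGraph α β) S (↑(S.image Prod.fst) ×ˢ ↑(S.image Prod.snd)) 2 := by
  have hfst : Set.InjOn Prod.fst (S : Set (α × β)) := Finset.card_image_iff.1 (hA.trans hS.symm)
  have hsnd : Set.InjOn Prod.snd (S : Set (α × β)) := Finset.card_image_iff.1 (hB.trans hS.symm)
  obtain ⟨⟨a₁, b₁⟩, ⟨a₂, b₂⟩, ⟨a₃, b₃⟩, h₁₂, h₁₃, -, rfl⟩ := Finset.card_eq_three.1 hS
  have ha₁₂ : a₁ ≠ a₂ := fun h => h₁₂ (hfst (by simp) (by simp) h)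
  have ha₁₃ : a₁ ≠ a₃ := fun h => h₁₃ (hfst (by simp) (by simp) h)
  have hb₁₂ : b₁ ≠ b₂ := fun h => h₁₂ (hsnd (by simp) (by simp) h)
  have hb₁₃ : b₁ ≠ b₃ := fun h => h₁₃ (hsnd (by simp) (by simp) h)
  push_cast
  refine ((isSteinerCore_fst_pair ha₁₂ ha₁₃ hb₁₂ hb₁₃).hasCorePacking_one.union
    (isSteinerCore_snd_pair ha₁₂ ha₁₃ hb₁₂ hb₁₃).hasCorePacking_one ?_).mono ?_
  · simp [ha₁₂.symm, ha₁₃.symm]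
  · simp [Set.insert_subset_iff]

theorem hasCorePacking_prod (hS : S.card = 3) :
    HasCorePacking (rookGraph α β) S (↑(S.image Prod.fst) ×ˢ ↑(S.image Prod.snd))
      ((S.image Prod.fst).card + (S.image Prod.snd).card - 4) := by
  have hA : (S.image Prod.fst).card ≤ 3 := hS ▸ Finset.card_image_le
  have hB : (S.image Prod.snd).card ≤ 3 := hS ▸ Finset.card_image_le
  obtain h | ⟨h, h'⟩ | ⟨h, h'⟩ | ⟨h, h'⟩ :
      (S.image Prod.fst).card + (S.image Prod.snd).card ≤ 4 ∨
      (S.image Prod.fst).card = 2 ∧ (S.image Prod.snd).card = 3 ∨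
      (S.image Prod.fst).card = 3 ∧ (S.image Prod.snd).card = 2 ∨
      (S.image Prod.fst).card = 3 ∧ (S.image Prod.snd).card = 3 := by omega
  · rw [Nat.sub_eq_zero_of_le h]
    exact hasCorePacking_zero
  · rw [h, h']
    exact hasCorePacking_one_of_card_fst_eq_two hS h h'
  · rw [h, h']
    exact hasCorePacking_one_of_card_snd_eq_two hS h h'
  · rw [h, h']
    exact hasCorePacking_two_of_card_eq_three hS h h'

end Inner

theorem le_tauLocal_rookGraph [Fintype α] [Fintype β] {S : Finset (α × β)} (hS : S.card = 3) :
    Fintype.card α + Fintype.card β - 4 ≤ tauLocal (rookGraph α β) S := by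
  classical
  have hne : S.Nonempty := Finset.card_pos.1 (by omega)
  have hencard : 2 < (S : Set (α × β)).encard := by
    rw [Set.encard_coe_eq_coe_finsetCard, hS]
    norm_num
  have hpack := ((hasCorePacking_prod hS).union (hasCorePacking_compl_prod hne)
    (Set.disjoint_prod.2 (Or.inl disjoint_compl_right))).union (hasCorePacking_prod_compl hne)
    (Set.disjoint_union_left.2 ⟨Set.disjoint_prod.2 (Or.inr disjoint_compl_right),
      Set.disjoint_prod.2 (Or.inl disjoint_compl_left)⟩)
  obtain ⟨x, hx⟩ := hne
  have hle := hpack.le_tauLocal hencard hx (Set.toFinite _)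
  have hA := Finset.card_le_univ (S.image Prod.fst)
  have hB := Finset.card_le_univ (S.image Prod.snd)
  omega

theorem tau_three_rookGraph_le [Fintype α] [Fintype β]
    (h : 3 ≤ Fintype.card α * Fintype.card β) :
    tau (rookGraph α β) 3 ≤ Fintype.card α + Fintype.card β - 4 := by
  classical
  obtain ⟨hα, hβ⟩ := CanonicallyOrderedAdd.mul_pos.1 (three_pos.trans_le h)
  obtain ⟨a⟩ := Fintype.card_pos_iff.1 hα
  obtain ⟨b⟩ := Fintype.card_pos_iff.1 hβ
  have hsum : 4 ≤ Fintype.card α + Fintype.card β := by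
    nlinarith [four_mul_le_sq_add (Fintype.card α) (Fintype.card β)]
  have hdeg : (rookGraph α β).degree (a, b) = (Fintype.card α - 1) + (Fintype.card β - 1) := by
    rw [degree_boxProd, complete_graph_degree, complete_graph_degree]
  have hle := tau_le_degree_add_one_sub le_rfl (a, b) (G := rookGraph α β) (by omega)
  rw [hdeg] at hle
  omega

end Rook

theorem tau_three_boxProd_general {α β : Type*} [Fintype α] [Fintype β]
    (h : 3 ≤ Fintype.card α * Fintype.card β) :
    tau ((⊤ : SimpleGraph α) □ (⊤ : SimpleGraph β)) 3 =
      Fintype.card α + Fintype.card β - 4 :=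
  le_antisymm (tau_three_rookGraph_le h)
    (le_tau (by simpa using h) fun _ hS => le_tauLocal_rookGraph hS)

/-- τ_3(K_r □ K_s) = r + s - 4 for r, s ≥ 3. -/
theorem tau_three_boxProd (r s : ℕ) (hr : 3 ≤ r) (hs : 3 ≤ s) :
    tau (SimpleGraph.boxProd (⊤ : SimpleGraph (Fin r)) (⊤ : SimpleGraph (Fin s))) 3
      = r + s - 4 := by
  simpa using tau_three_boxProd_general (α := Fin r) (β := Fin s)
    (by simpa using (show 3 ≤ 3 * 3 by norm_num).trans (Nat.mul_le_mul hr hs))
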